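/- In addition to the hypotheses guaranteeing finite-time controllability outside the singular set (Ω open, 𝒯 ⊆ Ω closed, H(x,p) = max_{a∈A}(−f(x,a)·p) from a symmetric convex-valued compact-controlled system, U a nonnegative C¹-supersolution of the Aronsson equation on Ω∖(𝒯∩ℋ) with U = 0 on 𝒯, U = M on ∂Ω, 0 < U < M on Ω∖𝒯, and the decay condition of the regularity theorem), assume moreover that the singular set ℋ ∩ (Ω∖𝒯), where ℋ = {x : H(x,∇U(x)) = 0}, is an embedded C¹ submanifold of ℝⁿ of dimension at most n−1, and that for every x₀ ∈ ℋ ∩ (Ω∖𝒯) there exists a ∈ A with f(x₀,a) not belonging to the tangent space T_{x₀}ℋ. Then for every x₀ ∈ Ω∖𝒯 there exist a measurable control and a finite time t ≥ 0 such that the corresponding admissible trajectory from x₀ reaches 𝒯 at time t. -/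

import Mathlib

open Set MeasureTheory
open scoped RealInnerProductSpace

/-- An admissible trajectory of the control system `ẋ = f(x,a)`, `a(t) ∈ A`,
starting at `x₀`. -/
def IsAdmTraj {n m : ℕ} (A : Set (EuclideanSpace ℝ (Fin m)))
    (f : EuclideanSpace ℝ (Fin n) → EuclideanSpace ℝ (Fin m) → EuclideanSpace ℝ (Fin n))
    (x₀ : EuclideanSpace ℝ (Fin n)) (x : ℝ → EuclideanSpace ℝ (Fin n)) : Prop :=
  x 0 = x₀ ∧ ContinuousOn x (Ici (0:ℝ)) ∧
    ∃ a : ℝ → EuclideanSpace ℝ (Fin m), Measurable a ∧ (∀ t, a t ∈ A) ∧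
      ∀ t : ℝ, 0 ≤ t → x t = x₀ + ∫ s in (0:ℝ)..t, f (x s) (a s)

/-- The set of times at which the target `T` can be reached from `x₀`. -/
def reachTimes {n m : ℕ} (Ω T : Set (EuclideanSpace ℝ (Fin n)))
    (A : Set (EuclideanSpace ℝ (Fin m)))
    (f : EuclideanSpace ℝ (Fin n) → EuclideanSpace ℝ (Fin m) → EuclideanSpace ℝ (Fin n))
    (x₀ : EuclideanSpace ℝ (Fin n)) : Set ℝ :=
  {t | 0 ≤ t ∧ ∃ x : ℝ → EuclideanSpace ℝ (Fin n), IsAdmTraj A f x₀ x ∧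
    (∀ s ∈ Icc (0:ℝ) t, x s ∈ Ω) ∧ x t ∈ T}

/-!
Write `V = H(·, ∇U)` and `F = -H_p(·, ∇U)`. By the envelope theorem `F` is an admissible velocity
and `⟪F, ∇U⟫ = -V`. Run an Euler scheme of step `r³` whose velocity at `y` is `F` at the maximum
point of `s ↦ V s - ‖s - y‖² / r²`: the subsolution inequality, tested with `‖· - y‖² / r²`, says
that the sup-convolution of `V` is almost nondecreasing along the scheme. In the limit `r → 0` one
obtains a trajectory of `ẋ = F(x)` along which `V` is nondecreasing. If `V x₀ > 0`, then `U`
decreases along it at rate at least `V x₀`, so it must leave `Ω \ T` in time at most `U x₀ / V x₀`,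
and as `U < M` on the way it does so through `T`. From a point with `V x₀ = 0` one first follows a
velocity that is not tangent to the singular set.
-/

section AronssonReachability

open Filter Metric
open scoped Topology Gradient

section Euler

variable {ι E : Type*} [NormedAddCommGroup E] [NormedSpace ℝ E]

/-- The point reached from `x₀` after `i` explicit Euler steps of length `h` for `ẋ = G x`. -/
def eulerPath (h : ℝ) (G : E → E) (x₀ : E) (i : ℕ) : E :=
  (fun y => y + h • G y)^[i] x₀

lemma eulerPath_succ (h : ℝ) (G : E → E) (x₀ : E) (i : ℕ) :
    eulerPath h G x₀ (i + 1) = eulerPath h G x₀ i + h • G (eulerPath h G x₀ i) :=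
  Function.iterate_succ_apply' ..

lemma norm_eulerPath_sub_sub_smul_le {h ε : ℝ} {G : E → E} {x₀ w : E} {i j : ℕ} (hh : 0 ≤ h)
    (hij : i ≤ j) (hG : ∀ l ∈ Ico i j, ‖G (eulerPath h G x₀ l) - w‖ ≤ ε) :
    ‖eulerPath h G x₀ j - eulerPath h G x₀ i - (j * h - i * h) • w‖ ≤ (j * h - i * h) * ε := by
  induction j, hij using Nat.le_induction with
  | base => simp
  | succ j hij ih =>
    have hlast := mul_le_mul_of_nonneg_left (hG j ⟨hij, j.lt_succ_self⟩) hh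
    have hprev := ih fun l hl => hG l ⟨hl.1, hl.2.trans j.lt_succ_self⟩
    rw [← Real.norm_of_nonneg hh, ← norm_smul, Real.norm_of_nonneg hh] at hlast
    calc _ = ‖(eulerPath h G x₀ j - eulerPath h G x₀ i - (j * h - i * h) • w)
          + h • (G (eulerPath h G x₀ j) - w)‖ := by
          rw [eulerPath_succ]; push_cast; congr 1; module
      _ ≤ (j * h - i * h) * ε + h * ε := norm_add_le_of_le hprev hlast
      _ = _ := by push_cast; ring

lemma norm_eulerPath_sub_le {h C : ℝ} {G : E → E} {i j : ℕ} (x₀ : E) (hh : 0 ≤ h) (hij : i ≤ j)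
    (hG : ∀ y, ‖G y‖ ≤ C) :
    ‖eulerPath h G x₀ j - eulerPath h G x₀ i‖ ≤ (j * h - i * h) * C := by
  simpa using norm_eulerPath_sub_sub_smul_le (x₀ := x₀) (w := 0) hh hij fun l _ => by
    simpa using hG (eulerPath h G x₀ l)

lemma natFloor_div_mul_le (t : ℝ) {h : ℝ} (hh : 0 < h) : ⌊t / h⌋₊ * h ≤ max t 0 := by
  rcases le_total t 0 with ht | ht
  · simp [Nat.floor_of_nonpos (div_nonpos_of_nonpos_of_nonneg ht hh.le)]
  · exact ((le_div_iff₀ hh).1 (Nat.floor_le (by positivity))).trans (le_max_left _ _)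

lemma tendsto_natFloor_div_mul (t : ℝ) {l : Filter ι} {h : ι → ℝ} (hh : Tendsto h l (𝓝[>] 0)) :
    Tendsto (fun k => (⌊t / h k⌋₊ : ℝ) * h k) l (𝓝 (max t 0)) := by
  have hpos : ∀ᶠ k in l, 0 < h k := hh.eventually self_mem_nhdsWithin
  rcases le_total t 0 with ht | ht
  · rw [max_eq_right ht]
    refine tendsto_const_nhds.congr' (hpos.mono fun k hk => ?_)
    simp [Nat.floor_of_nonpos (div_nonpos_of_nonpos_of_nonneg ht hk.le)]
  · rw [max_eq_left ht]
    simpa [Function.comp_def, div_eq_mul_inv] using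
      (tendsto_nat_floor_mul_div_atTop ht).comp hh.inv_tendsto_nhdsGT_zero

/-- `x` is the pointwise limit along `l` of the Euler polygons from `x₀` for the velocity fields
`G k`, all bounded by `C`, with step lengths `h k` decreasing to `0`. For `t < 0` the index
`⌊t / h k⌋₊` is `0`, so that `x t = x₀`. -/
structure IsEulerLimit (l : Filter ι) (h : ι → ℝ) (G : ι → E → E) (C : ℝ) (x₀ : E)
    (x : ℝ → E) : Prop where
  tendsto_step : Tendsto h l (𝓝[>] 0)
  norm_le : ∀ k y, ‖G k y‖ ≤ C
  tendsto : ∀ t, Tendsto (fun k => eulerPath (h k) (G k) x₀ ⌊t / h k⌋₊) l (𝓝 (x t))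

theorem exists_isEulerLimit [ProperSpace E] (l : Ultrafilter ι) {h : ι → ℝ} {G : ι → E → E}
    {C : ℝ} (hh : Tendsto h l (𝓝[>] 0)) (hG : ∀ k y, ‖G k y‖ ≤ C) (x₀ : E) :
    ∃ x, IsEulerLimit l h G C x₀ x := by
  have hbdd : ∀ t, ∀ᶠ k in (l : Filter ι),
      eulerPath (h k) (G k) x₀ ⌊t / h k⌋₊ ∈ closedBall x₀ (max t 0 * C) := by
    intro t
    filter_upwards [hh.eventually self_mem_nhdsWithin] with k (hk : 0 < h k)
    rw [mem_closedBall, dist_eq_norm]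
    have := norm_eulerPath_sub_le x₀ hk.le (Nat.zero_le ⌊t / h k⌋₊) (hG k)
    have hC : 0 ≤ C := (norm_nonneg _).trans (hG k 0)
    calc _ ≤ (⌊t / h k⌋₊ * h k) * C := by simpa [eulerPath] using this
      _ ≤ max t 0 * C := by gcongr; exact natFloor_div_mul_le t hk
  choose x _ hx using fun t => (isCompact_closedBall x₀ _).ultrafilter_le_nhds
    (l.map fun k => eulerPath (h k) (G k) x₀ ⌊t / h k⌋₊) (le_principal_iff.2 (hbdd t))
  exact ⟨x, hh, hG, hx⟩

namespace IsEulerLimit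

variable {l : Filter ι} {h : ι → ℝ} {G : ι → E → E} {C : ℝ} {x₀ : E} {x : ℝ → E}

lemma eventually_step_pos (hx : IsEulerLimit l h G C x₀ x) : ∀ᶠ k in l, 0 < h k :=
  hx.tendsto_step.eventually self_mem_nhdsWithin

lemma tendsto_elapsed (hx : IsEulerLimit l h G C x₀ x) (s t : ℝ) :
    Tendsto (fun k => (⌊t / h k⌋₊ : ℝ) * h k - ⌊s / h k⌋₊ * h k) l
      (𝓝 (max t 0 - max s 0)) :=
  (tendsto_natFloor_div_mul t hx.tendsto_step).sub (tendsto_natFloor_div_mul s hx.tendsto_step)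

lemma eventually_floor_le (hx : IsEulerLimit l h G C x₀ x) {s t : ℝ} (hst : s ≤ t) :
    ∀ᶠ k in l, ⌊s / h k⌋₊ ≤ ⌊t / h k⌋₊ := by
  filter_upwards [hx.eventually_step_pos] with k hk
  gcongr

lemma eventually_forall_eulerPath (hx : IsEulerLimit l h G C x₀ x) (t₀ : ℝ) {p : ι × E → Prop}
    (hp : ∀ᶠ q in l ×ˢ 𝓝 (x t₀), p q) :
    ∀ᶠ t in 𝓝[≥] t₀, ∀ᶠ k in l, ∀ i ∈ Icc ⌊t₀ / h k⌋₊ ⌊t / h k⌋₊,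
      p (k, eulerPath (h k) (G k) x₀ i) := by
  obtain ⟨pl, hpl, px, hpx, hpq⟩ := eventually_prod_iff.1 hp
  obtain ⟨ρ, hρ, hball⟩ := eventually_nhds_iff_ball.1 hpx
  have hshort : ∀ᶠ t in 𝓝[≥] t₀, (max t 0 - max t₀ 0) * C < ρ / 2 := by
    have : Tendsto (fun t => (max t 0 - max t₀ 0) * C) (𝓝 t₀) (𝓝 0) :=
      Continuous.tendsto' (by fun_prop) _ _ (by simp)
    exact nhdsWithin_le_nhds (this.eventually_lt_const (half_pos hρ))
  filter_upwards [hshort] with t ht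
  filter_upwards [hpl, hx.eventually_step_pos,
    ((hx.tendsto_elapsed t₀ t).mul_const C).eventually_lt_const ht,
    (hx.tendsto t₀).eventually (ball_mem_nhds _ (half_pos hρ))] with k hkl hk hkC hk₀ i hi
  refine hpq hkl (hball _ ?_)
  have hC : 0 ≤ C := (norm_nonneg _).trans (hx.norm_le k 0)
  have hti : (i : ℝ) * h k ≤ ⌊t / h k⌋₊ * h k := by gcongr; exact hi.2
  have hmove := norm_eulerPath_sub_le x₀ hk.le hi.1 (hx.norm_le k)
  rw [← dist_eq_norm] at hmove
  calc _ ≤ _ := dist_triangle _ (eulerPath (h k) (G k) x₀ ⌊t₀ / h k⌋₊) _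
    _ < ρ / 2 + ρ / 2 := by
      refine add_lt_add (hmove.trans_lt (lt_of_le_of_lt ?_ hkC)) hk₀
      gcongr
    _ = ρ := add_halves ρ

variable [l.NeBot]

lemma apply_zero (hx : IsEulerLimit l h G C x₀ x) : x 0 = x₀ :=
  tendsto_nhds_unique (hx.tendsto 0) (by simp [eulerPath])

lemma norm_sub_sub_smul_le (hx : IsEulerLimit l h G C x₀ x) {s t ε : ℝ} {w : E} (hs : 0 ≤ s)
    (hst : s ≤ t) (hG : ∀ᶠ k in l, ∀ i ∈ Ico ⌊s / h k⌋₊ ⌊t / h k⌋₊,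
      ‖G k (eulerPath (h k) (G k) x₀ i) - w‖ ≤ ε) :
    ‖x t - x s - (t - s) • w‖ ≤ (t - s) * ε := by
  have helapsed := hx.tendsto_elapsed s t
  rw [max_eq_left hs, max_eq_left (hs.trans hst)] at helapsed
  refine le_of_tendsto_of_tendsto
    (((hx.tendsto t).sub (hx.tendsto s)).sub (helapsed.smul_const w)).norm
    (helapsed.mul_const ε) ?_
  filter_upwards [hx.eventually_step_pos, hx.eventually_floor_le hst, hG] with k hk hle hGk
  exact norm_eulerPath_sub_sub_smul_le hk.le hle hGk

lemma norm_sub_le (hx : IsEulerLimit l h G C x₀ x) {s t : ℝ} (hst : s ≤ t) :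
    ‖x t - x s‖ ≤ (max t 0 - max s 0) * C := by
  refine le_of_tendsto_of_tendsto ((hx.tendsto t).sub (hx.tendsto s)).norm
    ((hx.tendsto_elapsed s t).mul_const C) ?_
  filter_upwards [hx.eventually_step_pos, hx.eventually_floor_le hst] with k hk hle
  exact norm_eulerPath_sub_le x₀ hk.le hle (hx.norm_le k)

lemma continuous (hx : IsEulerLimit l h G C x₀ x) : Continuous x := by
  have hC : 0 ≤ C := by
    obtain ⟨k⟩ := nonempty_of_neBot l
    exact (norm_nonneg _).trans (hx.norm_le k 0)
  refine (LipschitzWith.of_dist_le_mul (K := ⟨C, hC⟩) fun s t => ?_).continuous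
  wlog hst : s ≤ t generalizing s t
  · simpa only [dist_comm] using this t s (le_of_not_ge hst)
  rw [dist_comm, dist_comm s, dist_eq_norm, Real.dist_eq, abs_of_nonneg (sub_nonneg.2 hst),
    mul_comm]
  refine (hx.norm_sub_le hst).trans (mul_le_mul_of_nonneg_right ?_ hC)
  have := max_sub_max_le_max t 0 s 0
  rwa [sub_zero, max_eq_left (sub_nonneg.2 hst)] at this

theorem hasDerivWithinAt (hx : IsEulerLimit l h G C x₀ x) {t₀ : ℝ} {w : E} (ht₀ : 0 ≤ t₀)
    (hw : Tendsto (fun q : ι × E => G q.1 q.2) (l ×ˢ 𝓝 (x t₀)) (𝓝 w)) :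
    HasDerivWithinAt x w (Ici t₀) t₀ := by
  rw [hasDerivWithinAt_iff_isLittleO, Asymptotics.isLittleO_iff]
  intro ε hε
  have hclose : ∀ᶠ q in l ×ˢ 𝓝 (x t₀), ‖G q.1 q.2 - w‖ ≤ ε := by
    filter_upwards [hw.eventually (closedBall_mem_nhds w hε)] with q hq
    rwa [← dist_eq_norm]
  filter_upwards [hx.eventually_forall_eulerPath t₀ hclose, self_mem_nhdsWithin]
    with t ht (hle : t₀ ≤ t)
  rw [Real.norm_of_nonneg (sub_nonneg.2 hle), mul_comm]
  exact hx.norm_sub_sub_smul_le ht₀ hle (ht.mono fun k hk i hi => hk i (Ico_subset_Icc_self hi))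

theorem eventually_le (hx : IsEulerLimit l h G C x₀ x) {t₀ : ℝ} {V : E → ℝ} {W : ι → E → ℝ}
    {e : ι → ℝ} (he : Tendsto e l (𝓝 0))
    (hstep : ∀ᶠ q in l ×ˢ 𝓝 (x t₀),
      W q.1 q.2 - h q.1 * e q.1 ≤ W q.1 (q.2 + h q.1 • G q.1 q.2))
    (hW : ∀ᶠ z in 𝓝 (x t₀), Tendsto (fun q : ι × E => W q.1 q.2) (l ×ˢ 𝓝 z) (𝓝 (V z))) :
    ∀ᶠ t in 𝓝[≥] t₀, V (x t₀) ≤ V (x t) := by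
  filter_upwards [hx.eventually_forall_eulerPath t₀ hstep,
    (hx.continuous.continuousAt.eventually hW).filter_mono nhdsWithin_le_nhds,
    self_mem_nhdsWithin] with t ht hWt (hle : t₀ ≤ t)
  have hlim : ∀ s, Tendsto (fun q : ι × E => W q.1 q.2) (l ×ˢ 𝓝 (x s)) (𝓝 (V (x s))) →
      Tendsto (fun k => W k (eulerPath (h k) (G k) x₀ ⌊s / h k⌋₊)) l (𝓝 (V (x s))) :=
    fun s hs => hs.comp (tendsto_id.prodMk (hx.tendsto s))
  have hloss : Tendsto (fun k => (⌊t / h k⌋₊ * h k - ⌊t₀ / h k⌋₊ * h k) * e k) l (𝓝 0) := by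
    simpa using (hx.tendsto_elapsed t₀ t).mul he
  refine le_of_tendsto_of_tendsto (by simpa using (hlim t₀ hW.self_of_nhds).sub hloss)
    (hlim t hWt) ?_
  filter_upwards [ht, hx.eventually_floor_le hle] with k hk hkle
  suffices ∀ j ∈ Icc ⌊t₀ / h k⌋₊ ⌊t / h k⌋₊, W k (eulerPath (h k) (G k) x₀ ⌊t₀ / h k⌋₊)
      - (j * h k - ⌊t₀ / h k⌋₊ * h k) * e k ≤ W k (eulerPath (h k) (G k) x₀ j) from
    this _ ⟨hkle, le_rfl⟩
  rintro j ⟨hj, hjt⟩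
  induction j, hj using Nat.le_induction with
  | base => simp
  | succ j hj ih =>
    have hlast := hk j ⟨hj, (Nat.le_succ j).trans hjt⟩
    have hprev := ih ((Nat.le_succ j).trans hjt)
    rw [eulerPath_succ]
    push_cast
    linarith

end IsEulerLimit

lemma apply_left_le_of_eventually_le {g : ℝ → ℝ} {a b : ℝ}
    (hab : a ≤ b) (hg : ContinuousOn g (Icc a b))
    (hloc : ∀ u ∈ Ico a b, ∀ᶠ u' in 𝓝[>] u, g u ≤ g u') : g a ≤ g b := by
  have hclosed : IsClosed ({u | g a ≤ g u} ∩ Icc a b) := by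
    rw [inter_comm]
    exact hg.preimage_isClosed_of_isClosed isClosed_Icc isClosed_Ici
  refine hclosed.Icc_subset_of_forall_exists_gt (le_refl (g a)) ?_ ⟨hab, le_rfl⟩
  rintro u ⟨hu : g a ≤ g u, huab⟩ v hv
  obtain ⟨u', hu', hmem⟩ := ((hloc u huab).and (Ioc_mem_nhdsGT hv)).exists
  exact ⟨u', hu.trans hu', hmem⟩

end Euler

section SupConvolution

variable {E : Type*} [NormedAddCommGroup E]

/-- `s` maximises `V - ‖· - y‖² / r²` over the closed ball of radius `r` around `y`. -/
def IsProx (V : E → ℝ) (r : ℝ) (y s : E) : Prop :=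
  s ∈ closedBall y r ∧ IsMaxOn (fun u => V u - ‖u - y‖ ^ 2 / r ^ 2) (closedBall y r) s

/-- A point with `IsProx V r y`, if there is one. -/
noncomputable def proxPoint (V : E → ℝ) (r : ℝ) (y : E) : E :=
  Classical.epsilon (IsProx V r y)

/-- The sup-convolution of `V` with the kernel `‖·‖² / r²`, localised to balls of radius `r`. -/
noncomputable def supConv (V : E → ℝ) (r : ℝ) (y : E) : ℝ :=
  V (proxPoint V r y) - ‖proxPoint V r y - y‖ ^ 2 / r ^ 2

namespace IsProx

variable {V : E → ℝ} {r : ℝ} {y s : E}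

lemma le_sub (h : IsProx V r y s) (hr : 0 ≤ r) : V y ≤ V s - ‖s - y‖ ^ 2 / r ^ 2 := by
  simpa using h.2 (mem_closedBall_self hr)

lemma norm_sub_lt (h : IsProx V r y s) (hr : 0 < r) (hV : V s < V y + 1 / 2) :
    ‖s - y‖ < 3 / 4 * r := by
  have hquot : ‖s - y‖ ^ 2 / r ^ 2 < 1 / 2 := by linarith [h.le_sub hr.le]
  rw [div_lt_iff₀ (by positivity)] at hquot
  exact lt_of_pow_lt_pow_left₀ 2 (by positivity) (by nlinarith)

end IsProx

section Limits

variable [ProperSpace E] {V : E → ℝ} {P : Set E} {z : E}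

lemma isProx_proxPoint {r : ℝ} {y : E} (hr : 0 ≤ r) (hV : ContinuousOn V (closedBall y r)) :
    IsProx V r y (proxPoint V r y) := by
  have hcont : ContinuousOn (fun u => V u - ‖u - y‖ ^ 2 / r ^ 2) (closedBall y r) := by fun_prop
  exact Classical.epsilon_spec
    ((isCompact_closedBall y r).exists_isMaxOn (nonempty_closedBall.2 hr) hcont)

lemma eventually_isProx_proxPoint (hP : P ∈ 𝓝 z) (hV : ContinuousOn V P) :
    ∀ᶠ q in 𝓝[>] 0 ×ˢ 𝓝 z, 0 < q.1 ∧ IsProx V q.1 q.2 (proxPoint V q.1 q.2) := by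
  obtain ⟨ρ, hρ, hball⟩ := Metric.mem_nhds_iff.1 hP
  filter_upwards [prod_mem_prod (Ioo_mem_nhdsGT (half_pos hρ)) (ball_mem_nhds z (half_pos hρ))]
    with ⟨r, y⟩ ⟨hr, hy⟩
  refine ⟨hr.1, isProx_proxPoint hr.1.le (hV.mono ((closedBall_subset_ball' ?_).trans hball))⟩
  exact (add_lt_add hr.2 hy).trans_eq (add_halves ρ)

lemma tendsto_proxPoint (hP : P ∈ 𝓝 z) (hV : ContinuousOn V P) :
    Tendsto (fun q : ℝ × E => proxPoint V q.1 q.2) (𝓝[>] 0 ×ˢ 𝓝 z) (𝓝 z) := by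
  have hbound : Tendsto (fun q : ℝ × E => q.1 + dist q.2 z) (𝓝[>] 0 ×ˢ 𝓝 z) (𝓝 0) := by
    have hcont : Continuous fun q : ℝ × E => q.1 + dist q.2 z := by fun_prop
    refine (hcont.tendsto' (0, z) 0 (by simp)).mono_left ?_
    rw [nhds_prod_eq]
    exact prod_mono nhdsWithin_le_nhds le_rfl
  refine tendsto_iff_dist_tendsto_zero.2 (squeeze_zero' (.of_forall fun _ => dist_nonneg) ?_ hbound)
  filter_upwards [eventually_isProx_proxPoint hP hV] with q hq
  exact (dist_triangle _ q.2 z).trans (by gcongr; exact hq.2.1)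

lemma eventually_norm_proxPoint_sub_lt (hP : P ∈ 𝓝 z) (hV : ContinuousOn V P) :
    ∀ᶠ q in 𝓝[>] 0 ×ˢ 𝓝 z, ‖proxPoint V q.1 q.2 - q.2‖ < 3 / 4 * q.1 := by
  have hVz : Tendsto V (𝓝 z) (𝓝 (V z)) := hV.continuousAt hP
  have hdiff := (hVz.comp (tendsto_proxPoint hP hV)).sub
    (hVz.comp (tendsto_snd (f := 𝓝[>] (0 : ℝ)) (g := 𝓝 z)))
  rw [sub_self] at hdiff
  filter_upwards [eventually_isProx_proxPoint hP hV, hdiff.eventually_lt_const one_half_pos]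
    with q ⟨hr, hprox⟩ hq
  exact hprox.norm_sub_lt hr (sub_lt_iff_lt_add'.1 hq)

lemma tendsto_supConv (hP : P ∈ 𝓝 z) (hV : ContinuousOn V P) :
    Tendsto (fun q : ℝ × E => supConv V q.1 q.2) (𝓝[>] 0 ×ˢ 𝓝 z) (𝓝 (V z)) := by
  have hVz : Tendsto V (𝓝 z) (𝓝 (V z)) := hV.continuousAt hP
  refine tendsto_of_tendsto_of_tendsto_of_le_of_le' (hVz.comp tendsto_snd)
    (hVz.comp (tendsto_proxPoint hP hV)) ?_ (.of_forall fun q => ?_)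
  · filter_upwards [eventually_isProx_proxPoint hP hV] with q ⟨hr, hprox⟩
    exact hprox.le_sub hr.le
  · exact sub_le_self _ (by positivity)

lemma tendsto_indicator_proxPoint {X : Type*} [TopologicalSpace X] [Zero X] {F : E → X}
    (hP : P ∈ 𝓝 z) (hF : ContinuousOn F P) (hV : ContinuousOn V P) :
    Tendsto (fun q : ℝ × E => P.indicator F (proxPoint V q.1 q.2)) (𝓝[>] 0 ×ˢ 𝓝 z)
      (𝓝 (F z)) := by
  refine ((hF.continuousAt hP).tendsto.comp (tendsto_proxPoint hP hV)).congr' ?_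
  filter_upwards [(tendsto_proxPoint hP hV).eventually hP] with q hq
  exact (indicator_of_mem hq F).symm

end Limits

end SupConvolution

section Viability

variable {E : Type*} [NormedAddCommGroup E] [InnerProductSpace ℝ E]

/-- `V` is a viscosity subsolution of the transport equation `-⟪F, ∇V⟫ = 0` at the points of `P`:
every `C¹` function touching `V` from above at a point of `P` is nondecreasing along `F` there. -/
def IsViscositySubsolution [CompleteSpace E] (F : E → E) (V : E → ℝ) (P : Set E) : Prop :=
  ∀ φ : E → ℝ, ContDiff ℝ 1 φ → ∀ x ∈ P, IsLocalMax (fun y => V y - φ y) x → 0 ≤ ⟪F x, ∇ φ x⟫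

lemma IsViscositySubsolution.mono [CompleteSpace E] {F : E → E} {V : E → ℝ} {P Q : Set E}
    (h : IsViscositySubsolution F V Q) (hPQ : P ⊆ Q) : IsViscositySubsolution F V P :=
  fun φ hφ x hx => h φ hφ x (hPQ hx)

lemma isViscositySubsolution_const [CompleteSpace E] (F : E → E) (c : ℝ) (P : Set E) :
    IsViscositySubsolution F (fun _ => c) P := by
  intro φ _ x _ hmax
  have hmin : IsLocalMin φ x := hmax.mono fun y hy => (sub_le_sub_iff_left c).1 hy
  rw [gradient, hmin.fderiv_eq_zero, map_zero, inner_zero_right]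

lemma IsProx.inner_nonneg [CompleteSpace E] {V : E → ℝ} {r : ℝ} {y s : E} {F : E → E} {P : Set E}
    (h : IsProx V r y s) (hr : 0 < r) (hsr : ‖s - y‖ < r) (hV : IsViscositySubsolution F V P)
    (hs : s ∈ P) : 0 ≤ ⟪F s, s - y⟫ := by
  have hgrad : HasGradientAt (fun u => ‖u - y‖ ^ 2 / r ^ 2) ((2 / r ^ 2) • (s - y)) s := by
    rw [hasGradientAt_iff_hasFDerivAt]
    refine (((hasFDerivAt_id s).sub_const y).norm_sq.mul_const (r ^ 2)⁻¹).congr_fderiv ?_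
    ext v
    simp only [id_eq, map_sub, ContinuousLinearMap.comp_id, smul_apply, sub_apply,
      coe_innerSL_apply, nsmul_eq_mul, Nat.cast_ofNat, smul_eq_mul, map_smul,
      InnerProductSpace.toDual_apply_apply]
    ring
  have htest := hV (fun u => ‖u - y‖ ^ 2 / r ^ 2)
    (((contDiff_id.sub contDiff_const).norm_sq ℝ).div_const _) s hs
    (h.2.isLocalMax (closedBall_mem_nhds_of_mem (by rwa [mem_ball, dist_eq_norm])))
  rw [hgrad.gradient, inner_smul_right] at htest
  exact nonneg_of_mul_nonneg_right htest (by positivity)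

lemma norm_sub_add_smul_sq_le {h C : ℝ} {v y s : E} (hh : 0 ≤ h) (hv : ‖v‖ ≤ C)
    (hvs : 0 ≤ ⟪v, s - y⟫) : ‖s - (y + h • v)‖ ^ 2 ≤ ‖s - y‖ ^ 2 + (h * C) ^ 2 := by
  have hnorm : ‖h • v‖ ^ 2 ≤ (h * C) ^ 2 := by
    rw [norm_smul, Real.norm_of_nonneg hh]
    gcongr
  have hinner : ⟪s - y, h • v⟫ = h * ⟪v, s - y⟫ := by rw [inner_smul_right, real_inner_comm]
  rw [← sub_sub, norm_sub_sq_real, hinner]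
  nlinarith [mul_nonneg hh hvs]

lemma IsProx.supConv_sub_le {V : E → ℝ} {r h C : ℝ} {y v : E} (hh : 0 ≤ h)
    (hprox : IsProx V r (y + h • v) (proxPoint V r (y + h • v)))
    (hs : ‖proxPoint V r y - y‖ ≤ 3 / 4 * r) (hv : ‖v‖ ≤ C) (hhr : h * C ≤ r / 4)
    (hvs : 0 ≤ ⟪v, proxPoint V r y - y⟫) :
    supConv V r y - (h * C) ^ 2 / r ^ 2 ≤ supConv V r (y + h • v) := by
  have hmem : proxPoint V r y ∈ closedBall (y + h • v) r := by
    rw [mem_closedBall, dist_eq_norm, ← sub_sub]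
    have hstep : ‖h • v‖ ≤ h * C := by
      rw [norm_smul, Real.norm_of_nonneg hh]
      gcongr
    linarith [norm_sub_le (proxPoint V r y - y) (h • v)]
  calc supConv V r y - (h * C) ^ 2 / r ^ 2
      = V (proxPoint V r y) - (‖proxPoint V r y - y‖ ^ 2 + (h * C) ^ 2) / r ^ 2 := by
        rw [supConv]; ring
    _ ≤ V (proxPoint V r y) - ‖proxPoint V r y - (y + h • v)‖ ^ 2 / r ^ 2 := by
        gcongr
        exact norm_sub_add_smul_sq_le hh hv hvs
    _ ≤ supConv V r (y + h • v) := hprox.2 hmem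

variable [ProperSpace E] {F : E → E} {V : E → ℝ} {P : Set E} {C : ℝ}

/-- One Euler step of length `r ^ 3` loses at most `r ^ 4 * C ^ 2` of the sup-convolution, hence
`r * C ^ 2` per unit of time. -/
lemma eventually_supConv_sub_le {z : E} (hP : P ∈ 𝓝 z) (hF : ContinuousOn F P)
    (hFC : ∀ x ∈ P, ‖F x‖ ≤ C) (hV : ContinuousOn V P) (hsub : IsViscositySubsolution F V P) :
    ∀ᶠ q in 𝓝[>] 0 ×ˢ 𝓝 z, supConv V q.1 q.2 - q.1 ^ 3 * (q.1 * C ^ 2) ≤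
      supConv V q.1 (q.2 + q.1 ^ 3 • P.indicator F (proxPoint V q.1 q.2)) := by
  have hfst : Tendsto Prod.fst (𝓝[>] (0 : ℝ) ×ˢ 𝓝 z) (𝓝 0) :=
    tendsto_fst.mono_right nhdsWithin_le_nhds
  have hstep : Tendsto
      (fun q : ℝ × E => (q.1, q.2 + q.1 ^ 3 • P.indicator F (proxPoint V q.1 q.2)))
      (𝓝[>] 0 ×ˢ 𝓝 z) (𝓝[>] 0 ×ˢ 𝓝 z) :=
    tendsto_fst.prodMk (by
      simpa using tendsto_snd.add ((hfst.pow 3).smul (tendsto_indicator_proxPoint hP hF hV)))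
  have hsmall : Tendsto (fun q : ℝ × E => q.1 ^ 2 * C) (𝓝[>] 0 ×ˢ 𝓝 z) (𝓝 0) := by
    simpa using (hfst.pow 2).mul_const C
  filter_upwards [eventually_isProx_proxPoint hP hV, eventually_norm_proxPoint_sub_lt hP hV,
    hstep.eventually (eventually_isProx_proxPoint hP hV),
    (tendsto_proxPoint hP hV).eventually hP,
    hsmall.eventually_lt_const (by norm_num : (0 : ℝ) < 1 / 4)]
    with ⟨r, y⟩ ⟨hr, hprox⟩ hnear ⟨_, hprox'⟩ hmem hrC
  dsimp only at hr hprox hnear hprox' hmem hrC ⊢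
  rw [indicator_of_mem hmem] at hprox' ⊢
  refine le_trans (le_of_eq ?_) (hprox'.supConv_sub_le (by positivity) hnear.le (hFC _ hmem)
    (by nlinarith) (hprox.inner_nonneg hr (by linarith) hsub hmem))
  field_simp

/-- A viscosity subsolution is nondecreasing along some trajectory: in the Euler scheme driven by
the velocity at the proximal point, the test function `‖· - y‖²` says precisely that the
sup-convolution does not decrease to first order. -/
theorem IsViscositySubsolution.exists_trajectory (hP : IsOpen P) (hF : ContinuousOn F P)
    (hFb : Bornology.IsBounded (F '' P)) (hV : ContinuousOn V P)
    (hsub : IsViscositySubsolution F V P) (x₀ : E) :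
    ∃ x : ℝ → E, x 0 = x₀ ∧ Continuous x ∧
      (∀ t, 0 ≤ t → x t ∈ P → HasDerivWithinAt x (F (x t)) (Ici t) t) ∧
      ∀ t, 0 ≤ t → (∀ s ∈ Icc 0 t, x s ∈ P) → V x₀ ≤ V (x t) := by
  obtain ⟨C, hC, hFC⟩ := hFb.exists_pos_norm_le
  replace hFC : ∀ x ∈ P, ‖F x‖ ≤ C := fun x hx => hFC _ (mem_image_of_mem F hx)
  let l : Ultrafilter ℝ := Ultrafilter.of (𝓝[>] 0)
  have hl : (l : Filter ℝ) ≤ 𝓝[>] 0 := Ultrafilter.of_le _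
  have hprod : ∀ z : E, (l : Filter ℝ) ×ˢ 𝓝 z ≤ 𝓝[>] 0 ×ˢ 𝓝 z := fun z => prod_mono hl le_rfl
  have hcube : Tendsto (fun r : ℝ => r ^ 3) l (𝓝[>] 0) := by
    refine (tendsto_nhdsWithin_iff.2 ⟨?_, ?_⟩).mono_left hl
    · exact ((continuous_pow 3).tendsto' (0 : ℝ) 0 (by simp)).mono_left nhdsWithin_le_nhds
    · filter_upwards [self_mem_nhdsWithin] with r (hr : 0 < r) using pow_pos hr 3
  obtain ⟨x, hx⟩ := exists_isEulerLimit l (G := fun r y => P.indicator F (proxPoint V r y)) hcube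
    (fun r y => (norm_indicator_eq_indicator_norm ..).trans_le
      (indicator_apply_le' (hFC _) fun _ => hC.le)) x₀
  refine ⟨x, hx.apply_zero, hx.continuous, fun t ht hxt => hx.hasDerivWithinAt ht
    ((tendsto_indicator_proxPoint (hP.mem_nhds hxt) hF hV).mono_left (hprod _)), ?_⟩
  intro t ht hxP
  rw [← hx.apply_zero]
  refine apply_left_le_of_eventually_le (g := V ∘ x) ht (hV.comp hx.continuous.continuousOn hxP)
    fun u hu => ?_
  have hPu := hP.mem_nhds (hxP u (Ico_subset_Icc_self hu))
  have hloss : Tendsto (fun r : ℝ => r * C ^ 2) l (𝓝 0) := by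
    simpa using (tendsto_id.mono_right (hl.trans nhdsWithin_le_nhds)).mul_const (C ^ 2)
  refine (hx.eventually_le hloss ((hprod _) (eventually_supConv_sub_le hPu hF hFC hV hsub))
    ?_).filter_mono (nhdsWithin_mono u Ioi_subset_Ici_self)
  filter_upwards [hPu] with z hz
  exact (tendsto_supConv (hP.mem_nhds hz) hV).mono_left (hprod z)

end Viability

section MeasurableSelection

open TopologicalSpace

lemma measurable_sInf_of_isCompact {α : Type*} [MeasurableSpace α] {Γ : α → Set ℝ}
    (hΓ : ∀ t, IsCompact (Γ t)) (hne : ∀ t, (Γ t).Nonempty)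
    (hmeas : ∀ b, MeasurableSet {t | (Γ t ∩ Iic b).Nonempty}) :
    Measurable fun t => sInf (Γ t) := by
  refine measurable_of_Iic fun b => ?_
  convert hmeas b using 1
  ext t
  exact ⟨fun ht => ⟨_, (hΓ t).sInf_mem (hne t), ht⟩,
    fun ⟨_, hs, hsb⟩ => (csInf_le (hΓ t).bddBelow hs).trans hsb⟩

lemma exists_continuous_surjective_cantorSet (X : Type*) [TopologicalSpace X] [MetrizableSpace X]
    [CompactSpace X] [Nonempty X] :
    ∃ g : cantorSet → X, Continuous g ∧ Function.Surjective g := by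
  let := metrizableSpaceMetric X
  obtain ⟨g, hg, hsurj⟩ := exists_nat_bool_continuous_surjective_of_compact X
  exact ⟨g ∘ cantorSetHomeomorphNatToBool, hg.comp cantorSetHomeomorphNatToBool.continuous,
    hsurj.comp cantorSetHomeomorphNatToBool.surjective⟩

/-- Pulling back to the Cantor set makes the values compact sets of reals, whose least elements
give the selection. -/
theorem exists_measurable_selection {α X : Type*} [MeasurableSpace α] [TopologicalSpace X]
    [MetrizableSpace X] [CompactSpace X] [MeasurableSpace X] [BorelSpace X] {Γ : α → Set X}
    (hne : ∀ t, (Γ t).Nonempty) (hΓ : ∀ t, IsClosed (Γ t))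
    (hmeas : ∀ B, IsClosed B → MeasurableSet {t | (Γ t ∩ B).Nonempty}) :
    ∃ a : α → X, Measurable a ∧ ∀ t, a t ∈ Γ t := by
  rcases isEmpty_or_nonempty α with _ | ⟨⟨t₀⟩⟩
  · exact ⟨isEmptyElim, measurable_of_empty _, isEmptyElim⟩
  have : Nonempty X := (hne t₀).to_type
  have : CompactSpace cantorSet := isCompact_iff_compactSpace.1 isCompact_cantorSet
  obtain ⟨g, hg, hsurj⟩ := exists_continuous_surjective_cantorSet X
  let S : α → Set ℝ := fun t => Subtype.val '' (g ⁻¹' Γ t)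
  have hScompact : ∀ t, IsCompact (S t) := fun t =>
    ((hΓ t).preimage hg).isCompact.image continuous_subtype_val
  have hSne : ∀ t, (S t).Nonempty := fun t => ((hne t).preimage hsurj).image _
  have hSmeas : ∀ b, MeasurableSet {t | (S t ∩ Iic b).Nonempty} := by
    intro b
    have hB : IsClosed (g '' (Subtype.val ⁻¹' Iic b)) :=
      ((isClosed_Iic.preimage continuous_subtype_val).isCompact.image hg).isClosed
    convert hmeas _ hB using 3 with t
    rw [← image_inter_preimage, inter_comm (Γ t), ← image_inter_preimage, image_nonempty,
      image_nonempty, inter_comm]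
  choose c hc hcS using fun t => (hScompact t).sInf_mem (hSne t)
  refine ⟨g ∘ c, hg.measurable.comp ?_, hc⟩
  have hval : Measurable fun t => (c t : ℝ) := by
    simpa only [hcS] using measurable_sInf_of_isCompact hScompact hSne hSmeas
  exact hval.subtype_mk

lemma exists_measurable_of_forall_exists_eq {α X Z : Type*} [TopologicalSpace α]
    [MeasurableSpace α] [OpensMeasurableSpace α] [TopologicalSpace X] [MetrizableSpace X]
    [CompactSpace X] [MeasurableSpace X] [BorelSpace X] [TopologicalSpace Z] [T2Space Z]
    {φ : α × X → Z} {w : α → Z} (hφ : Continuous φ) (hw : Continuous w)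
    (h : ∀ t, ∃ b, φ (t, b) = w t) :
    ∃ a : α → X, Measurable a ∧ ∀ t, φ (t, a t) = w t := by
  refine exists_measurable_selection (Γ := fun t => {b | φ (t, b) = w t}) h
    (fun t => isClosed_eq (by fun_prop) continuous_const) fun B hB => ?_
  have hclosed : IsClosed ({q | φ q = w q.1} ∩ Prod.snd ⁻¹' B) :=
    (isClosed_eq hφ (hw.comp continuous_fst)).inter (hB.preimage continuous_snd)
  convert (isClosedMap_fst_of_compactSpace _ hclosed).measurableSet using 1
  ext t
  exact ⟨fun ⟨b, hb⟩ => ⟨(t, b), hb, rfl⟩, by rintro ⟨⟨_, b⟩, hb, rfl⟩; exact ⟨b, hb⟩⟩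

/-- Filippov's implicit function lemma. -/
theorem exists_measurable_eqOn_of_mem_image {α X Z : Type*} [TopologicalSpace α]
    [MeasurableSpace α] [OpensMeasurableSpace α] [TopologicalSpace X] [MetrizableSpace X]
    [MeasurableSpace X] [BorelSpace X] [TopologicalSpace Z] [T2Space Z] {I : Set α} {A : Set X}
    {φ : α → X → Z} {w : α → Z} (hI : MeasurableSet I) (hA : IsCompact A) (hAne : A.Nonempty)
    (hφ : ContinuousOn (Function.uncurry φ) (I ×ˢ A)) (hw : ContinuousOn w I)
    (h : ∀ t ∈ I, w t ∈ φ t '' A) :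
    ∃ a : α → X, Measurable a ∧ (∀ t, a t ∈ A) ∧ EqOn (fun t => φ t (a t)) w I := by
  have : CompactSpace A := isCompact_iff_compactSpace.1 hA
  have : Nonempty A := hAne.to_subtype
  have hφ' : Continuous fun q : I × A => φ q.1 q.2 :=
    hφ.comp_continuous (f := fun q : I × A => ((q.1 : α), (q.2 : X))) (by fun_prop)
      fun q => ⟨q.1.2, q.2.2⟩
  obtain ⟨b, hb, hbw⟩ := exists_measurable_of_forall_exists_eq hφ' hw.domRestrict
    fun t => by obtain ⟨a, ha, hat⟩ := h t t.2; exact ⟨⟨a, ha⟩, hat⟩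
  obtain ⟨a, ha, hab⟩ := (MeasurableEmbedding.subtype_coe hI).exists_measurable_extend hb
    fun _ => inferInstance
  refine ⟨fun t => a t, ha.subtype_val, fun t => (a t).2, fun t ht => ?_⟩
  simpa [← hab] using hbw ⟨t, ht⟩

end MeasurableSelection

section Concatenation

variable {Y : Type*} {τ s : ℝ}

/-- The curve following `g₁` up to time `τ` and then `g₂`, restarted at time `τ`. -/
noncomputable def curveConcat (τ : ℝ) (g₁ g₂ : ℝ → Y) (s : ℝ) : Y :=
  if s ≤ τ then g₁ s else g₂ (s - τ)

lemma curveConcat_of_le (g₁ g₂ : ℝ → Y) (hs : s ≤ τ) : curveConcat τ g₁ g₂ s = g₁ s := if_pos hs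

lemma curveConcat_add {g₁ g₂ : ℝ → Y} (hg : g₂ 0 = g₁ τ) (hs : 0 ≤ s) :
    curveConcat τ g₁ g₂ (τ + s) = g₂ s := by
  rcases hs.eq_or_lt with rfl | hs
  · simp [curveConcat, hg]
  · simp [curveConcat, hs]

lemma forall_mem_Icc_add {τ₁ τ₂ : ℝ} {p : ℝ → Prop} (h₁ : ∀ s ∈ Icc 0 τ₁, p s)
    (h₂ : ∀ s ∈ Icc 0 τ₂, p (τ₁ + s)) : ∀ s ∈ Icc 0 (τ₁ + τ₂), p s := by
  intro s hs
  rcases le_total s τ₁ with hs₁ | hs₁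
  · exact h₁ s ⟨hs.1, hs₁⟩
  · simpa using h₂ (s - τ₁) ⟨sub_nonneg.2 hs₁, sub_le_iff_le_add'.2 hs.2⟩

lemma forall_curveConcat {p : Y → Prop} {g₁ g₂ : ℝ → Y} (h₁ : ∀ s, p (g₁ s)) (h₂ : ∀ s, p (g₂ s))
    (s : ℝ) : p (curveConcat τ g₁ g₂ s) := by
  rw [curveConcat]
  split_ifs
  exacts [h₁ s, h₂ (s - τ)]

lemma measurable_curveConcat [MeasurableSpace Y] {g₁ g₂ : ℝ → Y} (h₁ : Measurable g₁)
    (h₂ : Measurable g₂) : Measurable (curveConcat τ g₁ g₂) :=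
  h₁.ite measurableSet_Iic (h₂.comp (measurable_id.sub_const τ))

lemma curveConcat_map₂ {Y' Z : Type*} (φ : Y → Y' → Z) (g₁ g₂ : ℝ → Y) (g₁' g₂' : ℝ → Y') :
    (fun s => φ (curveConcat τ g₁ g₂ s) (curveConcat τ g₁' g₂' s)) =
      curveConcat τ (fun s => φ (g₁ s) (g₁' s)) fun s => φ (g₂ s) (g₂' s) := by
  funext s
  simp only [curveConcat]
  split_ifs <;> rfl

lemma eqOn_curveConcat_left (g₁ g₂ : ℝ → Y) (hs : 0 ≤ s) (hsτ : s ≤ τ) :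
    EqOn g₁ (curveConcat τ g₁ g₂) (uIoo 0 s) := by
  intro u hu
  rw [uIoo_of_le hs] at hu
  exact (curveConcat_of_le g₁ g₂ (hu.2.le.trans hsτ)).symm

lemma eqOn_curveConcat_right (g₁ g₂ : ℝ → Y) (hs : 0 ≤ s) :
    EqOn (fun u => g₂ (u - τ)) (curveConcat τ g₁ g₂) (uIoo τ (τ + s)) := by
  intro u hu
  rw [uIoo_of_le (le_add_of_nonneg_right hs)] at hu
  exact (if_neg hu.1.not_ge).symm

variable {E : Type*} [NormedAddCommGroup E] {v₁ v₂ : ℝ → E}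

lemma intervalIntegrable_curveConcat (hτ : 0 ≤ τ) (hs : 0 ≤ s)
    (h₁ : IntervalIntegrable v₁ volume 0 τ) (h₂ : IntervalIntegrable v₂ volume 0 s) :
    IntervalIntegrable (curveConcat τ v₁ v₂) volume 0 τ ∧
      IntervalIntegrable (curveConcat τ v₁ v₂) volume τ (τ + s) := by
  refine ⟨h₁.congr_uIoo (eqOn_curveConcat_left v₁ v₂ hτ le_rfl), ?_⟩
  have hshift := h₂.comp_sub_right τ
  rw [zero_add, add_comm s] at hshift
  exact hshift.congr_uIoo (eqOn_curveConcat_right v₁ v₂ hs)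

variable [NormedSpace ℝ E]

lemma integral_curveConcat_of_le (v₁ v₂ : ℝ → E) (hs : 0 ≤ s) (hsτ : s ≤ τ) :
    ∫ u in (0 : ℝ)..s, curveConcat τ v₁ v₂ u = ∫ u in (0 : ℝ)..s, v₁ u :=
  (intervalIntegral.integral_congr_uIoo (eqOn_curveConcat_left v₁ v₂ hs hsτ)).symm

lemma integral_curveConcat_add (hτ : 0 ≤ τ) (hs : 0 ≤ s) (h₁ : IntervalIntegrable v₁ volume 0 τ)
    (h₂ : IntervalIntegrable v₂ volume 0 s) :
    ∫ u in (0 : ℝ)..(τ + s), curveConcat τ v₁ v₂ u =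
      (∫ u in (0 : ℝ)..τ, v₁ u) + ∫ u in (0 : ℝ)..s, v₂ u := by
  obtain ⟨hleft, hright⟩ := intervalIntegrable_curveConcat hτ hs h₁ h₂
  rw [← intervalIntegral.integral_add_adjacent_intervals hleft hright,
    integral_curveConcat_of_le v₁ v₂ hτ le_rfl,
    ← intervalIntegral.integral_congr_uIoo (eqOn_curveConcat_right v₁ v₂ hs),
    intervalIntegral.integral_comp_sub_right, sub_self, add_sub_cancel_left]

end Concatenation

section Steering

variable {E X : Type*} [NormedAddCommGroup E] [NormedSpace ℝ E] [MeasurableSpace X]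

/-- `c` solves `ċ = f c a` on `[0, τ]` in Carathéodory's sense, staying in `Ω`, for the measurable
control `a` with values in `A`. -/
structure IsControlledArc (Ω : Set E) (A : Set X) (f : E → X → E) (τ : ℝ) (c : ℝ → E)
    (a : ℝ → X) : Prop where
  nonneg : 0 ≤ τ
  measurable : Measurable a
  mem_control : ∀ s, a s ∈ A
  mapsTo : MapsTo c (Icc 0 τ) Ω
  intervalIntegrable : IntervalIntegrable (fun s => f (c s) (a s)) volume 0 τ
  eq_integral : ∀ s ∈ Icc 0 τ, c s = c 0 + ∫ u in (0 : ℝ)..s, f (c u) (a u)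

/-- Some controlled arc in `Ω` leads from `x` to `y`. -/
def Steers (Ω : Set E) (A : Set X) (f : E → X → E) (x y : E) : Prop :=
  ∃ τ c a, IsControlledArc Ω A f τ c a ∧ c 0 = x ∧ c τ = y

variable {Ω : Set E} {A : Set X} {f : E → X → E}

namespace IsControlledArc

variable {τ : ℝ} {c : ℝ → E} {a : ℝ → X}

lemma continuousOn (h : IsControlledArc Ω A f τ c a) : ContinuousOn c (Icc 0 τ) := by
  rw [← uIcc_of_le h.nonneg]
  refine ContinuousOn.congr (continuousOn_const (c := c 0) |>.add
    (intervalIntegral.continuousOn_primitive_interval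
      ((intervalIntegrable_iff' (by simp)).1 h.intervalIntegrable))) fun s hs => ?_
  exact h.eq_integral s (uIcc_of_le h.nonneg ▸ hs)

lemma intervalIntegrable_of_mem (h : IsControlledArc Ω A f τ c a) {s : ℝ} (hs : s ∈ Icc 0 τ) :
    IntervalIntegrable (fun u => f (c u) (a u)) volume 0 s := by
  refine h.intervalIntegrable.mono_set ?_
  rw [uIcc_of_le hs.1, uIcc_of_le h.nonneg]
  exact Icc_subset_Icc_right hs.2

theorem concat {τ₁ τ₂ : ℝ} {c₁ c₂ : ℝ → E} {a₁ a₂ : ℝ → X} (h₁ : IsControlledArc Ω A f τ₁ c₁ a₁)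
    (h₂ : IsControlledArc Ω A f τ₂ c₂ a₂) (hc : c₂ 0 = c₁ τ₁) :
    IsControlledArc Ω A f (τ₁ + τ₂) (curveConcat τ₁ c₁ c₂) (curveConcat τ₁ a₁ a₂) where
  nonneg := add_nonneg h₁.nonneg h₂.nonneg
  measurable := measurable_curveConcat h₁.measurable h₂.measurable
  mem_control := forall_curveConcat h₁.mem_control h₂.mem_control
  mapsTo := by
    refine forall_mem_Icc_add (fun s hs => ?_) fun s hs => ?_
    · rw [curveConcat_of_le _ _ hs.2]
      exact h₁.mapsTo hs
    · rw [curveConcat_add hc hs.1]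
      exact h₂.mapsTo hs
  intervalIntegrable := by
    rw [curveConcat_map₂ f]
    obtain ⟨hleft, hright⟩ := intervalIntegrable_curveConcat h₁.nonneg h₂.nonneg
      h₁.intervalIntegrable h₂.intervalIntegrable
    exact hleft.trans hright
  eq_integral := by
    rw [curveConcat_map₂ f, curveConcat_of_le _ _ h₁.nonneg]
    refine forall_mem_Icc_add (fun s hs => ?_) fun s hs => ?_
    · rw [integral_curveConcat_of_le _ _ hs.1 hs.2, curveConcat_of_le _ _ hs.2]
      exact h₁.eq_integral s hs
    · rw [integral_curveConcat_add h₁.nonneg hs.1 h₁.intervalIntegrable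
        (h₂.intervalIntegrable_of_mem hs), curveConcat_add hc hs.1, ← add_assoc,
        ← h₁.eq_integral τ₁ ⟨h₁.nonneg, le_rfl⟩, ← hc]
      exact h₂.eq_integral s hs

lemma const {x : E} {a : X} {τ : ℝ} (hτ : 0 ≤ τ) (hx : x ∈ Ω) (ha : a ∈ A) (hxa : f x a = 0) :
    IsControlledArc Ω A f τ (fun _ => x) fun _ => a :=
  ⟨hτ, measurable_const, fun _ => ha, fun _ _ => hx, by simp [hxa], by simp [hxa]⟩

end IsControlledArc

theorem Steers.trans {x y z : E} (hxy : Steers Ω A f x y) (hyz : Steers Ω A f y z) :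
    Steers Ω A f x z := by
  obtain ⟨τ₁, c₁, a₁, h₁, rfl, hy⟩ := hxy
  obtain ⟨τ₂, c₂, a₂, h₂, rfl, rfl⟩ := hyz
  exact ⟨_, _, _, h₁.concat h₂ hy.symm, curveConcat_of_le _ _ h₁.nonneg,
    curveConcat_add hy.symm h₂.nonneg⟩

theorem steers_of_hasDerivWithinAt [CompleteSpace E] [TopologicalSpace X]
    [TopologicalSpace.MetrizableSpace X] [BorelSpace X] {τ : ℝ} {c w : ℝ → E} (hA : IsCompact A)
    (hAne : A.Nonempty) (hf : ContinuousOn (Function.uncurry f) (Ω ×ˢ A)) (hτ : 0 ≤ τ)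
    (hc : ContinuousOn c (Icc 0 τ)) (hcΩ : MapsTo c (Icc 0 τ) Ω) (hw : ContinuousOn w (Ico 0 τ))
    (hwA : ∀ s ∈ Ico 0 τ, w s ∈ f (c s) '' A)
    (hcw : ∀ s ∈ Ico 0 τ, HasDerivWithinAt c (w s) (Ici s) s) :
    Steers Ω A f (c 0) (c τ) := by
  have hfc : ContinuousOn (Function.uncurry fun s => f (c s)) (Icc 0 τ ×ˢ A) :=
    hf.comp (f := Prod.map c id) (hc.prodMap continuousOn_id) (hcΩ.prodMap (mapsTo_id A))
  obtain ⟨a, ha, haA, haw⟩ := exists_measurable_eqOn_of_mem_image measurableSet_Ico hA hAne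
    (hfc.mono (prod_mono_left Ico_subset_Icc_self)) hw hwA
  obtain ⟨C, hC⟩ := ((isCompact_Icc.prod hA).image_of_continuousOn hfc).isBounded.exists_norm_le
  have hint : IntervalIntegrable (fun s => f (c s) (a s)) volume 0 τ := by
    have hsm : AEStronglyMeasurable (fun s => f (c s) (a s)) (volume.restrict (Ioo 0 τ)) :=
      ((hw.congr haw).mono Ioo_subset_Ico_self).aestronglyMeasurable measurableSet_Ioo
    refine (intervalIntegrable_iff_integrableOn_Ioo_of_le hτ).2
      ⟨hsm, .restrict_of_bounded (C := C) (by simp) ?_⟩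
    exact ae_restrict_of_forall_mem measurableSet_Ioo fun s hs =>
      hC _ ⟨(s, a s), ⟨Ioo_subset_Icc_self hs, haA s⟩, rfl⟩
  refine ⟨τ, c, a, ⟨hτ, ha, haA, hcΩ, hint, fun s hs => ?_⟩, rfl, rfl⟩
  have hsub : Ico 0 s ⊆ Ico 0 τ := Ico_subset_Ico_right hs.2
  rw [intervalIntegral.integral_eq_sub_of_hasDeriv_right_of_le hs.1
    (hc.mono (Icc_subset_Icc_right hs.2))]
  · abel
  · intro u hu
    have hu' := hsub (Ioo_subset_Ico_self hu)
    rw [show f (c u) (a u) = w u from haw hu']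
    exact (hcw u hu').mono Ioi_subset_Ici_self
  · refine hint.mono_set ?_
    rw [uIcc_of_le hs.1, uIcc_of_le hτ]
    exact Icc_subset_Icc_right hs.2

end Steering

section ReachTimes

variable {n m : ℕ} {Ω T : Set (EuclideanSpace ℝ (Fin n))} {A : Set (EuclideanSpace ℝ (Fin m))}
  {f : EuclideanSpace ℝ (Fin n) → EuclideanSpace ℝ (Fin m) → EuclideanSpace ℝ (Fin n)}
  {x y : EuclideanSpace ℝ (Fin n)}

/-- An admissible trajectory is defined for all times: after reaching `y` it rests there. -/
theorem Steers.reachTimes_nonempty (h : Steers Ω A f x y) (hy : y ∈ T)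
    (hrest : ∃ a ∈ A, f y a = 0) : (reachTimes Ω T A f x).Nonempty := by
  obtain ⟨τ, c, a, harc, rfl, rfl⟩ := h
  obtain ⟨b, hb, hrest⟩ := hrest
  have hΩ : c τ ∈ Ω := harc.mapsTo ⟨harc.nonneg, le_rfl⟩
  have hlong : ∀ s, 0 ≤ s → IsControlledArc Ω A f (τ + s) (curveConcat τ c fun _ => c τ)
      (curveConcat τ a fun _ => b) := fun s hs => harc.concat (.const hs hΩ hb hrest) rfl
  have h0 : curveConcat τ c (fun _ => c τ) 0 = c 0 := curveConcat_of_le _ _ harc.nonneg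
  refine ⟨τ, harc.nonneg, curveConcat τ c fun _ => c τ, ⟨h0, ?_, _, (hlong 0 le_rfl).measurable,
    (hlong 0 le_rfl).mem_control, fun t ht => ?_⟩, ?_, ?_⟩
  · intro t (ht : 0 ≤ t)
    have hlt : t < τ + (t + 1) := by linarith [harc.nonneg]
    exact ((hlong (t + 1) (by positivity)).continuousOn t ⟨ht, hlt.le⟩).mono_of_mem_nhdsWithin
      (inter_mem_nhdsWithin _ (Iic_mem_nhds hlt))
  · rw [← h0]
    exact (hlong t ht).eq_integral t ⟨ht, le_add_of_nonneg_left harc.nonneg⟩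
  · exact fun s hs => (hlong 0 le_rfl).mapsTo (by simpa using hs)
  · rwa [curveConcat_of_le _ _ le_rfl]

end ReachTimes

section Hamiltonian

variable {E X : Type*} [NormedAddCommGroup E]

lemma continuousOn_of_isGreatest_image {Y : Type*} [TopologicalSpace X] [TopologicalSpace Y]
    {φ : Y → X → ℝ} {h : Y → ℝ} {D : Set Y} {A : Set X} (hA : IsCompact A)
    (hφ : ContinuousOn (Function.uncurry φ) (D ×ˢ A))
    (hh : ∀ y ∈ D, IsGreatest (φ y '' A) (h y)) : ContinuousOn h D := by
  have hφ' : Continuous ↿fun (y : D) (a : A) => φ y a :=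
    hφ.comp_continuous (f := fun q : D × A => ((q.1 : Y), (q.2 : X))) (by fun_prop)
      fun q => ⟨q.1.2, q.2.2⟩
  have hsup := (isCompact_iff_isCompact_univ.1 hA).continuous_sSup hφ'
  refine continuousOn_iff_continuous_domRestrict.2 (hsup.congr fun y => ?_)
  have himage : (fun a : A => φ y a) '' univ = φ y '' A := by
    rw [image_univ, image_eq_range]
  exact himage ▸ (hh y y.2).csSup_eq

/-- Envelope theorem: if `a` attains the maximum at `p`, then `h + ⟪g a, ·⟫` has a minimum at
`p`. -/
lemma exists_mem_eq_neg_gradient [InnerProductSpace ℝ E] [CompleteSpace E] {g : X → E}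
    {h : E → ℝ} {A : Set X} {G p : E} (hh : ∀ q, IsGreatest ((fun a => -⟪g a, q⟫) '' A) (h q))
    (hG : HasGradientAt h G p) : ∃ a ∈ A, g a = -G ∧ ⟪G, p⟫ = h p := by
  obtain ⟨a, ha, hap : -⟪g a, p⟫ = h p⟩ := (hh p).1
  have hmin : IsLocalMin (fun q => h q + ⟪g a, q⟫) p := by
    refine .of_forall fun q => ?_
    have hq : -⟪g a, q⟫ ≤ h q := (hh q).2 ⟨a, ha, rfl⟩
    linarith
  have hzero := hmin.hasFDerivAt_eq_zero (hG.hasFDerivAt.add (innerSL ℝ (g a)).hasFDerivAt)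
  have hga : G + g a = 0 := ext_inner_right ℝ fun v => by
    simpa [inner_add_left] using DFunLike.congr_fun hzero v
  have hgG : g a = -G := (neg_eq_of_add_eq_zero_right hga).symm
  exact ⟨a, ha, hgG, by rw [← hap, hgG, inner_neg_left, neg_neg]⟩

lemma exists_forall_norm_le_mul_norm_add [TopologicalSpace X] {Ω : Set E} {A : Set X}
    {f : E → X → E} {L : ℝ} (hA : IsCompact A)
    (hf : ContinuousOn (Function.uncurry f) (Ω ×ˢ A))
    (hL : ∀ a ∈ A, ∀ x ∈ Ω, ∀ y ∈ Ω, ‖f x a - f y a‖ ≤ L * ‖x - y‖) :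
    ∃ K, ∀ x ∈ Ω, ∀ a ∈ A, ‖f x a‖ ≤ K * ‖x‖ + K := by
  rcases Ω.eq_empty_or_nonempty with rfl | ⟨y, hy⟩
  · exact ⟨0, by simp⟩
  obtain ⟨B, hB⟩ := hA.exists_bound_of_continuousOn (hf.uncurry_left y hy)
  refine ⟨|L| + |B| + |L| * ‖y‖, fun x hx a ha => ?_⟩
  calc ‖f x a‖ ≤ ‖f x a - f y a‖ + ‖f y a‖ := norm_le_norm_sub_add _ _
    _ ≤ |L| * (‖x‖ + ‖y‖) + |B| := by
      gcongr
      · exact (hL a ha x hx y hy).trans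
          (mul_le_mul (le_abs_self L) (norm_sub_le x y) (norm_nonneg _) (abs_nonneg L))
      · exact (hB a ha).trans (le_abs_self B)
    _ ≤ (|L| + |B| + |L| * ‖y‖) * ‖x‖ + (|L| + |B| + |L| * ‖y‖) := by
      nlinarith [norm_nonneg x, norm_nonneg y, abs_nonneg L, abs_nonneg B,
        mul_nonneg (abs_nonneg L) (norm_nonneg y), mul_nonneg (abs_nonneg B) (norm_nonneg x),
        mul_nonneg (mul_nonneg (abs_nonneg L) (norm_nonneg y)) (norm_nonneg x)]

end Hamiltonian

section Descent

lemma exists_first_exit {Y : Type*} [TopologicalSpace Y] {x : ℝ → Y} {P : Set Y} {W : ℝ}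
    (hP : IsOpen P) (hx : Continuous x) (h0 : x 0 ∈ P)
    (hW : ∀ t > 0, (∀ s ∈ Ico 0 t, x s ∈ P) → t ≤ W) :
    ∃ τ > 0, (∀ s ∈ Ico 0 τ, x s ∈ P) ∧ x τ ∉ P := by
  let S : Set ℝ := Ici 0 ∩ x ⁻¹' Pᶜ
  have hbdd : BddBelow S := ⟨0, fun s hs => hs.1⟩
  have hne : S.Nonempty := by
    by_contra! hS
    have hxP : ∀ s ∈ Ici (0 : ℝ), x s ∈ P := fun s hs => by_contra fun h => hS.subset ⟨hs, h⟩
    linarith [hW (|W| + 1) (by positivity) fun s hs => hxP s hs.1, le_abs_self W]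
  obtain ⟨hτ, hxτ⟩ : sInf S ∈ S :=
    (isClosed_Ici.inter (hP.isClosed_compl.preimage hx)).csInf_mem hne hbdd
  refine ⟨sInf S, lt_of_le_of_ne hτ fun h => hxτ (h ▸ h0), fun s hs => ?_, hxτ⟩
  by_contra hsP
  exact (csInf_le hbdd ⟨hs.1, hsP⟩).not_gt hs.2

lemma le_apply_of_forall_mem_Ico {g : ℝ → ℝ} {c τ : ℝ} (hτ : 0 < τ) (hg : ContinuousAt g τ)
    (h : ∀ s ∈ Ico 0 τ, c ≤ g s) : c ≤ g τ :=
  ge_of_tendsto (hg.mono_left nhdsWithin_le_nhds : Tendsto g (𝓝[<] τ) (𝓝 (g τ))) <| by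
    filter_upwards [Ico_mem_nhdsLT hτ] using h

variable {E : Type*} [NormedAddCommGroup E] [InnerProductSpace ℝ E]

lemma le_sub_mul_of_inner_gradient_le [CompleteSpace E] {D : Set E} {U : E → ℝ} {x w : ℝ → E}
    {v τ : ℝ} (hUc : ContinuousOn U (closure D)) (hU : ∀ y ∈ D, DifferentiableAt ℝ U y)
    (hx : Continuous x) (hτ : 0 < τ) (hxD : ∀ s ∈ Ico 0 τ, x s ∈ D)
    (hxw : ∀ s ∈ Ico 0 τ, HasDerivWithinAt x (w s) (Ici s) s)
    (hw : ∀ s ∈ Ico 0 τ, ⟪w s, ∇ U (x s)⟫ ≤ -v) :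
    x τ ∈ closure D ∧ U (x τ) ≤ U (x 0) - v * τ := by
  have hxcl : MapsTo x (Icc 0 τ) (closure D) := by
    rw [← closure_Ico hτ.ne]
    exact MapsTo.closure_of_continuousOn (fun s hs => hxD s hs) hx.continuousOn
  refine ⟨hxcl ⟨hτ.le, le_rfl⟩, image_le_of_deriv_right_le_deriv_boundary (f := U ∘ x)
    (f' := fun s => ⟪∇ U (x s), w s⟫) (B := fun s => U (x 0) - v * s) (B' := fun _ => -v)
    (hUc.comp hx.continuousOn hxcl) (fun s hs => ?_) (by simp) (by fun_prop) (fun s _ => ?_)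
    (fun s hs => (real_inner_comm _ _).trans_le (hw s hs)) ⟨hτ.le, le_rfl⟩⟩
  · exact (hU _ (hxD s hs)).hasGradientAt.hasFDerivAt.comp_hasDerivWithinAt s (hxw s hs)
  · simpa using ((hasDerivAt_id s).const_mul v).const_sub (U (x 0)) |>.hasDerivWithinAt

lemma exit_bounds_of_inner_gradient_le [CompleteSpace E] {D : Set E} {U : E → ℝ} {x w : ℝ → E}
    {K v τ : ℝ} (hUc : ContinuousOn U (closure D)) (hU : ∀ y ∈ D, DifferentiableAt ℝ U y)
    (hUnn : ∀ y ∈ D, 0 ≤ U y) (hK : 0 ≤ K) (hv : 0 < v) (hx : Continuous x) (hτ : 0 < τ)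
    (hxD : ∀ s ∈ Ico 0 τ, x s ∈ D) (hxw : ∀ s ∈ Ico 0 τ, HasDerivWithinAt x (w s) (Ici s) s)
    (hw : ∀ s ∈ Ico 0 τ, ⟪w s, ∇ U (x s)⟫ ≤ -v) (hwK : ∀ s ∈ Ico 0 τ, ‖w s‖ ≤ K * ‖x s‖ + K) :
    x τ ∈ closure D ∧ U (x τ) ≤ U (x 0) ∧ τ ≤ U (x 0) / v ∧
      ‖x τ‖ ≤ gronwallBound ‖x 0‖ K K (U (x 0) / v) := by
  obtain ⟨hcl, hUτ⟩ := le_sub_mul_of_inner_gradient_le hUc hU hx hτ hxD hxw hw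
  have hUτ0 : 0 ≤ U (x τ) := le_on_closure hUnn continuousOn_const hUc hcl
  have hτv : τ ≤ U (x 0) / v := (le_div_iff₀ hv).2 (by linarith)
  have hnorm := norm_le_gronwallBound_of_norm_deriv_right_le hx.continuousOn hxw le_rfl hwK τ
    ⟨hτ.le, le_rfl⟩
  rw [sub_zero] at hnorm
  exact ⟨hcl, by nlinarith, hτv, hnorm.trans (gronwallBound_mono (norm_nonneg _) hK hK hτv)⟩

/-- Along the trajectory on which `V` is nondecreasing, `U` decreases at rate at least `V x₀`, so
the trajectory leaves `D` by the time `U x₀ / V x₀`; Grönwall's inequality confines it to a ball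
until then. -/
theorem exists_trajectory_to_frontier [ProperSpace E] {D : Set E} {U V : E → ℝ} {F : E → E}
    {K : ℝ} {x₀ : E} (hD : IsOpen D) (hUc : ContinuousOn U (closure D))
    (hU : ∀ x ∈ D, DifferentiableAt ℝ U x) (hUnn : ∀ x ∈ D, 0 ≤ U x) (hV : ContinuousOn V D)
    (hF : ContinuousOn F {x ∈ D | 0 < V x})
    (hFK : ∀ x ∈ {x ∈ D | 0 < V x}, ‖F x‖ ≤ K * ‖x‖ + K)
    (hFU : ∀ x ∈ {x ∈ D | 0 < V x}, ⟪F x, ∇ U x⟫ = -V x)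
    (hsub : IsViscositySubsolution F V {x ∈ D | 0 < V x}) (hx₀ : x₀ ∈ {x ∈ D | 0 < V x}) :
    ∃ τ > 0, ∃ x : ℝ → E, x 0 = x₀ ∧ Continuous x ∧
      (∀ s ∈ Ico 0 τ, x s ∈ {x ∈ D | 0 < V x} ∧ HasDerivWithinAt x (F (x s)) (Ici s) s) ∧
      x τ ∈ frontier D ∧ U (x τ) ≤ U x₀ := by
  let R := gronwallBound ‖x₀‖ K K (U x₀ / V x₀) + 1
  let P := {x ∈ D | 0 < V x} ∩ ball 0 R
  have hP : IsOpen P := (hV.isOpen_inter_preimage hD isOpen_Ioi).inter isOpen_ball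
  have hK : 0 ≤ K := by
    nlinarith [norm_nonneg x₀, (norm_nonneg (F x₀)).trans (hFK x₀ hx₀)]
  have hFb : Bornology.IsBounded (F '' P) := by
    refine isBounded_iff_forall_norm_le.2 ⟨K * R + K, ?_⟩
    rintro _ ⟨x, ⟨hx, hxR⟩, rfl⟩
    have hxR' : ‖x‖ ≤ R := (mem_ball_zero_iff.1 hxR).le
    exact (hFK x hx).trans (by gcongr)
  obtain ⟨x, rfl, hx, hxF, hVmono⟩ := hsub.mono inter_subset_left |>.exists_trajectory hP
    (hF.mono inter_subset_left) hFb (hV.mono fun y hy => hy.1.1) x₀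
  have hVx : ∀ t, (∀ s ∈ Ico 0 t, x s ∈ P) → ∀ s ∈ Ico 0 t, V (x 0) ≤ V (x s) :=
    fun t hxP s hs => hVmono s hs.1 fun r hr => hxP r ⟨hr.1, hr.2.trans_lt hs.2⟩
  have hbounds : ∀ t > 0, (∀ s ∈ Ico 0 t, x s ∈ P) → x t ∈ closure D ∧ U (x t) ≤ U (x 0) ∧
      t ≤ U (x 0) / V (x 0) ∧ ‖x t‖ ≤ gronwallBound ‖x 0‖ K K (U (x 0) / V (x 0)) := by
    refine fun t ht hxP => exit_bounds_of_inner_gradient_le hUc hU hUnn hK hx₀.2 hx ht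
      (fun s hs => (hxP s hs).1.1) (fun s hs => hxF s hs.1 (hxP s hs)) (fun s hs => ?_)
      fun s hs => hFK _ (hxP s hs).1
    rw [hFU _ (hxP s hs).1]
    exact neg_le_neg (hVx t hxP s hs)
  have hx0R : ‖x 0‖ < R := by
    have hW : 0 ≤ U (x 0) / V (x 0) := div_nonneg (hUnn _ hx₀.1) hx₀.2.le
    exact ((gronwallBound_x0 _ K K).symm.trans_le
      (gronwallBound_mono (norm_nonneg _) hK hK hW)).trans_lt (lt_add_one _)
  obtain ⟨τ, hτ, hxP, hxτ⟩ := exists_first_exit hP hx ⟨hx₀, mem_ball_zero_iff.2 hx0R⟩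
    fun t ht hxP => (hbounds t ht hxP).2.2.1
  obtain ⟨hcl, hUτ, -, hnorm⟩ := hbounds τ hτ hxP
  refine ⟨τ, hτ, x, rfl, hx, fun s hs => ⟨(hxP s hs).1, hxF s hs.1 (hxP s hs)⟩, ?_, hUτ⟩
  rw [hD.frontier_eq]
  refine ⟨hcl, fun hxD => hxτ ⟨⟨hxD, ?_⟩, mem_ball_zero_iff.2 (hnorm.trans_lt (lt_add_one _))⟩⟩
  have hVτ := (hV.continuousAt (hD.mem_nhds hxD)).comp hx.continuousAt
  exact hx₀.2.trans_le (le_apply_of_forall_mem_Ico hτ hVτ (hVx τ hxP))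

end Descent

section TangentCone

variable {E F : Type*} [NormedAddCommGroup E] [NormedSpace ℝ E]

lemma mem_posTangentConeAt_of_hasDerivWithinAt {S : Set E} {x : ℝ → E} {v : E}
    (hx : HasDerivWithinAt x v (Ici 0) 0) (hS : ∃ᶠ t in 𝓝[>] 0, x t ∈ S) :
    v ∈ posTangentConeAt S (x 0) := by
  have hslope : Tendsto (fun t => t⁻¹ • (x t - x 0)) (𝓝[>] 0) (𝓝 v) := by
    simpa [slope_fun_def] using (hasDerivWithinAt_iff_tendsto_slope' self_notMem_Ioi).1
      hx.Ioi_of_Ici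
  refine mem_tangentConeAt_of_frequently (𝓝[>] (0 : ℝ)) (fun t => (t⁻¹).toNNReal)
    (fun t => x t - x 0) ?_ (by simpa using hS) (hslope.congr' ?_)
  · exact tendsto_sub_nhds_zero_iff.2 (hx.continuousWithinAt.mono Ioi_subset_Ici_self)
  · filter_upwards [self_mem_nhdsWithin] with t (ht : 0 < t)
    rw [NNReal.smul_def, Real.coe_toNNReal _ (inv_nonneg.2 ht.le)]

lemma apply_mem_of_mem_posTangentConeAt [NormedAddCommGroup F] [NormedSpace ℝ F] {S u : Set E}
    {p : Submodule ℝ F} {φ : E → F} {φ' : E →L[ℝ] F} {x v : E} (hp : IsClosed (p : Set F))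
    (hφ : HasFDerivAt φ φ' x) (hu : u ∈ 𝓝 x) (hφx : φ x ∈ p) (hS : ∀ y ∈ S ∩ u, φ y ∈ p)
    (hv : v ∈ posTangentConeAt S x) : φ' v ∈ p := by
  rw [posTangentConeAt, ← tangentConeAt_inter_nhds hu] at hv
  obtain ⟨ι, l, _, c, d, hd, hdS, hcd⟩ := exists_fun_of_mem_tangentConeAt hv
  have hlim := hφ.hasFDerivWithinAt.lim (c := fun i => (c i : ℝ)) hd hdS hcd
  exact hp.mem_of_tendsto hlim <| hdS.mono fun i hi => p.smul_mem _ (p.sub_mem (hS _ hi) hφx)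

end TangentCone

section Reachability

variable {E X : Type*} [NormedAddCommGroup E] [InnerProductSpace ℝ E] [ProperSpace E]
  [TopologicalSpace X] [MeasurableSpace X] [TopologicalSpace.MetrizableSpace X] [BorelSpace X]
  {Ω T D : Set E} {A : Set X} {f : E → X → E}

lemma exists_notMem_steers {S : Set E} {x₀ : E} {a : X} (hA : IsCompact A)
    (hf : ContinuousOn (Function.uncurry f) (Ω ×ˢ A)) (hD : IsOpen D) (hDΩ : D ⊆ Ω)
    (hx₀ : x₀ ∈ D) (ha : a ∈ A) (haS : f x₀ a ∉ posTangentConeAt S x₀) :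
    ∃ z ∈ D, z ∉ S ∧ Steers Ω A f x₀ z := by
  let P := D ∩ (f · a) ⁻¹' ball 0 (‖f x₀ a‖ + 1)
  have hfa : ContinuousOn (f · a) D := (hf.uncurry_right a ha).mono hDΩ
  have hP : IsOpen P := hfa.isOpen_inter_preimage hD isOpen_ball
  have hPb : Bornology.IsBounded ((f · a) '' P) :=
    isBounded_ball.subset (image_subset_iff.2 inter_subset_right)
  obtain ⟨x, rfl, hx, hxf, -⟩ := (isViscositySubsolution_const _ 0 P).exists_trajectory hP
    (hfa.mono inter_subset_left) hPb continuousOn_const x₀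
  have hx0P : x 0 ∈ P := ⟨hx₀, by simp⟩
  obtain ⟨ε, hε, hεP⟩ := Metric.mem_nhds_iff.1
    (hx.continuousAt.preimage_mem_nhds (hP.mem_nhds hx0P))
  have hleave : ∀ᶠ t in 𝓝[>] 0, x t ∉ S := by
    by_contra h
    exact haS (mem_posTangentConeAt_of_hasDerivWithinAt (hxf 0 le_rfl hx0P) h)
  obtain ⟨t, htS, ht, htε⟩ := (hleave.and (Ioo_mem_nhdsGT hε)).exists
  have hxP : ∀ s ∈ Icc 0 t, x s ∈ P := fun s hs =>
    hεP (by simpa [abs_of_nonneg hs.1] using hs.2.trans_lt htε)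
  have hxD : MapsTo x (Icc 0 t) D := fun s hs => (hxP s hs).1
  refine ⟨x t, hxD ⟨ht.le, le_rfl⟩, htS, steers_of_hasDerivWithinAt (w := fun s => f (x s) a) hA
    ⟨a, ha⟩ hf ht.le hx.continuousOn (hxD.mono_right hDΩ) ?_ (fun s _ => ⟨a, ha, rfl⟩)
    fun s hs => hxf s hs.1 (hxP s (Ico_subset_Icc_self hs))⟩
  exact hfa.comp hx.continuousOn fun s hs => hxD (Ico_subset_Icc_self hs)

theorem exists_steers_of_viscositySubsolution {U V : E → ℝ} {F : E → E} {K M : ℝ} {x₀ : E}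
    (hΩ : IsOpen Ω) (hT : IsClosed T) (hA : IsCompact A)
    (hf : ContinuousOn (Function.uncurry f) (Ω ×ˢ A))
    (hfK : ∀ x ∈ Ω, ∀ a ∈ A, ‖f x a‖ ≤ K * ‖x‖ + K)
    (hUc : ContinuousOn U (closure (Ω \ T))) (hU : ∀ x ∈ Ω \ T, DifferentiableAt ℝ U x)
    (hUΩ : ∀ x ∈ Ω \ T, 0 ≤ U x ∧ U x < M) (hUfr : ∀ x ∈ frontier Ω, M ≤ U x)
    (hV : ContinuousOn V (Ω \ T)) (hF : ContinuousOn F {x ∈ Ω \ T | 0 < V x})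
    (hFA : ∀ x ∈ {x ∈ Ω \ T | 0 < V x}, F x ∈ f x '' A)
    (hFU : ∀ x ∈ {x ∈ Ω \ T | 0 < V x}, ⟪F x, ∇ U x⟫ = -V x)
    (hsub : IsViscositySubsolution F V {x ∈ Ω \ T | 0 < V x})
    (hx₀ : x₀ ∈ {x ∈ Ω \ T | 0 < V x}) : ∃ y ∈ T, Steers Ω A f x₀ y := by
  have hFK : ∀ x ∈ {x ∈ Ω \ T | 0 < V x}, ‖F x‖ ≤ K * ‖x‖ + K := by
    intro x hx
    obtain ⟨a, ha, hax⟩ := hFA x hx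
    exact hax ▸ hfK x hx.1.1 a ha
  have hD : IsOpen (Ω \ T) := hΩ.sdiff hT
  obtain ⟨τ, hτ, x, rfl, hx, hxF, hxτ, hUτ⟩ := exists_trajectory_to_frontier hD hUc hU
    (fun x hx => (hUΩ x hx).1) hV hF hFK hFU hsub hx₀
  rw [hD.frontier_eq] at hxτ
  have hxτΩ : x τ ∈ Ω := by
    by_contra h
    have hfr : x τ ∈ frontier Ω := hΩ.frontier_eq ▸ ⟨closure_mono sdiff_subset hxτ.1, h⟩
    exact (hUfr _ hfr).not_gt (hUτ.trans_lt (hUΩ _ hx₀.1).2)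
  have hxΩ : MapsTo x (Icc 0 τ) Ω := fun s hs => by
    rcases hs.2.lt_or_eq with h | rfl
    exacts [(hxF s ⟨hs.1, h⟩).1.1.1, hxτΩ]
  refine ⟨x τ, by_contra fun h => hxτ.2 ⟨hxτΩ, h⟩, steers_of_hasDerivWithinAt hA
    ((hFA _ hx₀).imp fun _ h => h.1) hf hτ.le hx.continuousOn hxΩ
    (hF.comp hx.continuousOn fun s hs => (hxF s hs).1) (fun s hs => hFA _ (hxF s hs).1)
    fun s hs => (hxF s hs).2⟩

theorem stmt_9_general {H : E → E → ℝ} {Hp : E → E → E} {U : E → ℝ} {K M : ℝ}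
    (hΩ : IsOpen Ω) (hT : IsClosed T) (hA : IsCompact A)
    (hf : ContinuousOn (Function.uncurry f) (Ω ×ˢ A))
    (hfK : ∀ x ∈ Ω, ∀ a ∈ A, ‖f x a‖ ≤ K * ‖x‖ + K)
    (hH : ∀ x ∈ Ω \ T, ∀ p, IsGreatest ((fun a => -⟪f x a, p⟫) '' A) (H x p))
    (hHp : ∀ x ∈ Ω \ T, ∀ p, 0 < H x p → HasGradientAt (H x) (Hp x p) p)
    (hHpc : ContinuousOn (Function.uncurry Hp) {q | 0 < H q.1 q.2})
    (hUc : ContinuousOn U (closure (Ω \ T))) (hU : ContDiffOn ℝ 1 U (Ω \ T))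
    (hUΩ : ∀ x ∈ Ω \ T, 0 ≤ U x ∧ U x < M) (hUfr : ∀ x ∈ frontier Ω, M ≤ U x)
    (hsub : IsViscositySubsolution (fun x => -Hp x (∇ U x)) (fun x => H x (∇ U x))
      {x ∈ Ω \ T | 0 < H x (∇ U x)})
    (hsing : ∀ x ∈ {x ∈ Ω \ T | H x (∇ U x) ≤ 0},
      ∃ a ∈ A, f x a ∉ posTangentConeAt {x ∈ Ω \ T | H x (∇ U x) ≤ 0} x) :
    ∀ x₀ ∈ Ω \ T, ∃ y ∈ T, Steers Ω A f x₀ y := by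
  have hD : IsOpen (Ω \ T) := hΩ.sdiff hT
  have hgrad : ContinuousOn (fun x => (x, ∇ U x)) (Ω \ T) :=
    continuousOn_id.prodMk <| (InnerProductSpace.toDual ℝ E).symm.continuous.comp_continuousOn
      (hU.continuousOn_fderiv_of_isOpen hD le_rfl)
  have hV : ContinuousOn (fun x => H x (∇ U x)) (Ω \ T) := by
    refine continuousOn_of_isGreatest_image (φ := fun x a => -⟪f x a, ∇ U x⟫) hA ?_
      fun x hx => hH x hx _
    have hgrad₂ : ContinuousOn (fun q : E × X => ∇ U q.1) ((Ω \ T) ×ˢ A) :=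
      (continuous_snd.comp_continuousOn hgrad).comp continuousOn_fst fun q hq => hq.1
    exact ((hf.mono (prod_mono_left sdiff_subset)).inner hgrad₂).neg
  have hF : ContinuousOn (fun x => -Hp x (∇ U x)) {x ∈ Ω \ T | 0 < H x (∇ U x)} :=
    (hHpc.comp (hgrad.mono (sep_subset _ _)) fun x hx => hx.2).neg
  have henvelope : ∀ x ∈ {x ∈ Ω \ T | 0 < H x (∇ U x)}, -Hp x (∇ U x) ∈ f x '' A ∧
      ⟪-Hp x (∇ U x), ∇ U x⟫ = -H x (∇ U x) := fun x hx => by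
    obtain ⟨a, ha, hfa, hH'⟩ := exists_mem_eq_neg_gradient (hH x hx.1) (hHp x hx.1 _ hx.2)
    exact ⟨⟨a, ha, hfa⟩, by rw [inner_neg_left, hH']⟩
  have hreg : ∀ z ∈ {x ∈ Ω \ T | 0 < H x (∇ U x)}, ∃ y ∈ T, Steers Ω A f z y := fun z hz =>
    exists_steers_of_viscositySubsolution hΩ hT hA hf hfK hUc
      (fun x hx => (hU.differentiableOn one_ne_zero).differentiableAt (hD.mem_nhds hx))
      hUΩ hUfr hV hF
      (fun x hx => (henvelope x hx).1) (fun x hx => (henvelope x hx).2) hsub hz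
  intro x₀ hx₀
  rcases lt_or_ge 0 (H x₀ (∇ U x₀)) with hpos | hle
  · exact hreg x₀ ⟨hx₀, hpos⟩
  · obtain ⟨a, ha, hatan⟩ := hsing x₀ ⟨hx₀, hle⟩
    obtain ⟨z, hz, hzS, hxz⟩ := exists_notMem_steers hA hf hD sdiff_subset hx₀ ha hatan
    obtain ⟨y, hy, hzy⟩ := hreg z ⟨hz, not_le.1 fun h => hzS ⟨hz, h⟩⟩
    exact ⟨y, hy, hxz.trans hzy⟩

end Reachability

lemma exists_apply_eq_zero {E X : Type*} [AddCommGroup E] [Module ℝ E] {g : X → E} {A : Set X}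
    (hA : A.Nonempty) (hconv : Convex ℝ (g '' A))
    (hsymm : ∀ a ∈ A, ∃ a' ∈ A, g a' = -g a) : ∃ a ∈ A, g a = 0 := by
  obtain ⟨a, ha⟩ := hA
  simpa [midpoint_self_neg] using hconv.midpoint_mem ⟨a, ha, rfl⟩ (hsymm a ha)

end AronssonReachability

/-- if moreover the singular set `ℋ ∩ (Ω \ T)` is an embedded `C¹`
submanifold of dimension at most `n-1` (encoded through a local `C¹` chart `φ`
flattening it onto a proper subspace `p`, whose differential at `x₀` is the linear
equivalence `L`, so that the tangent space is `L⁻¹(p)`), and at each of its points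
some admissible velocity `f(x₀,a)` is not tangent to it, then the target can be
reached in finite time from every point of `Ω \ T`. -/
theorem stmt_9 {n m : ℕ} (Ω : Set (EuclideanSpace ℝ (Fin n))) (hΩo : IsOpen Ω)
    (T : Set (EuclideanSpace ℝ (Fin n))) (hT : IsClosed T) (hTΩ : T ⊆ Ω)
    (A : Set (EuclideanSpace ℝ (Fin m))) (hA : A.Nonempty) (hAc : IsCompact A)
    (f : EuclideanSpace ℝ (Fin n) → EuclideanSpace ℝ (Fin m) → EuclideanSpace ℝ (Fin n))
    (hfc : ContinuousOn (fun q : EuclideanSpace ℝ (Fin n) × EuclideanSpace ℝ (Fin m) =>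
      f q.1 q.2) (Ω ×ˢ A))
    (L : ℝ) (hLip : ∀ a ∈ A, ∀ x ∈ Ω, ∀ y ∈ Ω, ‖f x a - f y a‖ ≤ L * ‖x - y‖)
    (hconv : ∀ x ∈ Ω, Convex ℝ (f x '' A))
    (hsymm : ∀ x ∈ Ω, ∀ a ∈ A, ∃ a' ∈ A, f x a' = -f x a)
    (H : EuclideanSpace ℝ (Fin n) → EuclideanSpace ℝ (Fin n) → ℝ)
    (hH : ∀ x p, IsGreatest ((fun a => -⟪f x a, p⟫) '' A) (H x p))
    (Hp : EuclideanSpace ℝ (Fin n) → EuclideanSpace ℝ (Fin n) → EuclideanSpace ℝ (Fin n))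
    (hHp : ∀ x p, 0 < H x p → HasGradientAt (H x) (Hp x p) p)
    (hHpc : ContinuousOn (fun q : EuclideanSpace ℝ (Fin n) × EuclideanSpace ℝ (Fin n) =>
      Hp q.1 q.2) {q | 0 < H q.1 q.2})
    (U : EuclideanSpace ℝ (Fin n) → ℝ) (M : ℝ) (hM : 0 < M)
    (hUc : ContinuousOn U (closure (Ω \ T)))
    (hU1 : ContDiffOn ℝ 1 U (Ω \ (T ∩ {x | H x (gradient U x) = 0})))
    (hUnn : ∀ x ∈ closure (Ω \ T), 0 ≤ U x)
    (hUT : ∀ x ∈ T, U x = 0) (hUfr : ∀ x ∈ frontier Ω, U x = M)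
    (hUΩ : ∀ x ∈ Ω \ T, 0 < U x ∧ U x < M)
    -- `U` is a `C¹`-supersolution of the Aronsson equation on `Ω \ (T ∩ ℋ)`
    (hsub : ∀ φ : EuclideanSpace ℝ (Fin n) → ℝ, ContDiff ℝ 1 φ →
      ∀ x₀ ∈ Ω \ (T ∩ {x | H x (gradient U x) = 0}), 0 < H x₀ (gradient U x₀) →
      IsLocalMaxOn (fun x => H x (gradient U x) - φ x)
        (Ω \ (T ∩ {x | H x (gradient U x) = 0})) x₀ →
      -⟪-(Hp x₀ (gradient U x₀)), gradient φ x₀⟫ ≤ 0)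
    (hsup : ∀ φ : EuclideanSpace ℝ (Fin n) → ℝ, ContDiff ℝ 1 φ →
      ∀ x₀ ∈ Ω \ (T ∩ {x | H x (gradient U x) = 0}), 0 < H x₀ (gradient U x₀) →
      IsLocalMinOn (fun x => H x (gradient U x) - φ x)
        (Ω \ (T ∩ {x | H x (gradient U x) = 0})) x₀ →
      0 ≤ ⟪-(Hp x₀ (gradient U x₀)), gradient φ x₀⟫)
    -- decay condition
    (hdecay : ∀ ε > (0:ℝ), ∃ δ > (0:ℝ), ∃ c > (0:ℝ), ∀ x ∈ Ω,
      ε ≤ H x (gradient U x) → Metric.infDist x T < δ →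
      U x ≤ c * Metric.infDist x T)
    -- `ℋ ∩ (Ω \ T)` is an embedded `C¹` submanifold of dimension `≤ n-1`,
    -- and some admissible velocity is transversal to it at each of its points
    (hman : ∀ x₀ ∈ {x | H x (gradient U x) = 0} ∩ (Ω \ T),
      ∃ (Lc : EuclideanSpace ℝ (Fin n) ≃L[ℝ] EuclideanSpace ℝ (Fin n))
        (p : Submodule ℝ (EuclideanSpace ℝ (Fin n)))
        (u : Set (EuclideanSpace ℝ (Fin n))) (φ : EuclideanSpace ℝ (Fin n) →
          EuclideanSpace ℝ (Fin n)),
        p ≠ ⊤ ∧ u ∈ nhds x₀ ∧ ContDiffOn ℝ 1 φ u ∧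
        HasFDerivAt φ (Lc : EuclideanSpace ℝ (Fin n) →L[ℝ] EuclideanSpace ℝ (Fin n)) x₀ ∧
        φ x₀ = 0 ∧
        (∀ x ∈ u, (x ∈ {y | H y (gradient U y) = 0} ∩ (Ω \ T) ↔ φ x ∈ p)) ∧
        -- `f(x₀,a) ∉ T_{x₀}ℋ = Lc⁻¹(p)` for some `a ∈ A`
        ∃ a ∈ A, Lc (f x₀ a) ∉ p) :
    -- the target is reached in finite time from every point of `Ω \ T`
    ∀ x₀ ∈ Ω \ T, (reachTimes Ω T A f x₀).Nonempty := by
  obtain ⟨K, hK⟩ := exists_forall_norm_le_mul_norm_add hAc hfc hLip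
  have hrest : ∀ x ∈ Ω, ∃ a ∈ A, f x a = 0 := fun x hx =>
    exists_apply_eq_zero hA (hconv x hx) (hsymm x hx)
  have hHnn : ∀ x ∈ Ω, 0 ≤ H x (gradient U x) := fun x hx => by
    obtain ⟨a, ha, hxa⟩ := hrest x hx
    exact (hH x _).2 ⟨a, ha, by simp [hxa]⟩
  have hsing : {x ∈ Ω \ T | H x (gradient U x) ≤ 0} =
      {x | H x (gradient U x) = 0} ∩ (Ω \ T) := ext fun x =>
    ⟨fun h => ⟨h.2.antisymm (hHnn x h.1.1), h.1⟩, fun h => ⟨h.2, h.1.le⟩⟩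
  have hD : Ω \ T ⊆ Ω \ (T ∩ {x | H x (gradient U x) = 0}) :=
    sdiff_subset_sdiff_right inter_subset_left
  intro x₀ hx₀
  obtain ⟨y, hy, hxy⟩ := stmt_9_general hΩo hT hAc hfc hK (fun x _ => hH x) (fun x _ => hHp x)
    hHpc hUc (hU1.mono hD) (fun x hx => (hUΩ x hx).imp_left le_of_lt) (fun x hx => (hUfr x hx).ge)
    (fun φ hφ x hx hmax => neg_nonpos.1 (hsub φ hφ x (hD hx.1) hx.2 (hmax.on _)))
    (hsing ▸ fun x hx => by
      obtain ⟨Lc, p, u, φ, -, hu, -, hφ, hφx, hiff, a, ha, hLa⟩ := hman x hx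
      exact ⟨a, ha, fun hv => hLa (apply_mem_of_mem_posTangentConeAt
        p.closed_of_finiteDimensional hφ hu (hφx ▸ p.zero_mem)
        (fun y hy => (hiff y hy.2).1 hy.1) hv)⟩) x₀ hx₀
  exact hxy.reachTimes_nonempty hy (hrest y (hTΩ hy))
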